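/- Assume the standing assumptions, let β ∈ ℝ, and assume ∑_{n=0}^∞ A^n_{vw} e^{-nβ} < ∞ for all v, w ∈ V. Fix v₀ ∈ V and let ψ be a non-zero β-harmonic vector for A with ψ_{v₀} = 1 which is an extreme point of E(A,β)_{v₀}. Then there is an infinite path t = (t_i)_{i=1}^∞ in G (i.e. A_{t_i t_{i+1}} > 0 for all i) such that t₁ = v₀, t_i ≠ t_j whenever i ≠ j, and for all v ∈ V, ψ_v = lim_{k→∞} (∑_{n=0}^∞ A^n_{v t_k} e^{-nβ}) / (∑_{n=0}^∞ A^n_{v₀ t_k} e^{-nβ}). -/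

import Mathlib

open scoped ENNReal
open Filter

variable {V : Type*}

/-- The set of vertices of the graph of `A` that emit no edges or infinitely many edges. -/
def VInf (A : V → V → ℝ≥0∞) : Set V :=
  {v | {w | A v w ≠ 0} = ∅ ∨ {w | A v w ≠ 0}.Infinite}

/-- A set of vertices is hereditary if every edge with source in it has range in it. -/
def Hereditary (A : V → V → ℝ≥0∞) (H : Set V) : Prop :=
  ∀ ⦃v w : V⦄, v ∈ H → A v w ≠ 0 → w ∈ H

/-- A set of vertices is saturated if it contains every finite emitter all of whose
out-neighbours lie in it. -/
def Saturated (A : V → V → ℝ≥0∞) (H : Set V) : Prop :=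
  ∀ v : V, v ∉ VInf A → (∀ w, A v w ≠ 0 → w ∈ H) → v ∈ H

/-- `A` is cofinal if the only hereditary and saturated subsets are `∅` and `V`. -/
def Cofinal (A : V → V → ℝ≥0∞) : Prop :=
  ∀ H : Set V, Hereditary A H → Saturated A H → H = ∅ ∨ H = Set.univ

/-- Matrix powers of `A`, with entries in `[0,∞]`. -/
noncomputable def Apow [DecidableEq V] (A : V → V → ℝ≥0∞) : ℕ → V → V → ℝ≥0∞
  | 0 => fun v w => if v = w then 1 else 0
  | n + 1 => fun v w => ∑' u, A v u * Apow A n u w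

/-- `e^β` as an extended nonnegative real. -/
noncomputable def expb (β : ℝ) : ℝ≥0∞ := ENNReal.ofReal (Real.exp β)

/-- `e^{-nβ}` as an extended nonnegative real. -/
noncomputable def expn (β : ℝ) (n : ℕ) : ℝ≥0∞ := ENNReal.ofReal (Real.exp (-(n : ℝ) * β))

/-- A vector `ξ : V → [0,∞)` is almost `β`-harmonic for `A` if
`∑_w A_{vw} ξ_w = e^β ξ_v` off `V_∞` and `∑_w A_{vw} ξ_w ≤ e^β ξ_v` on `V_∞`. -/
def IsAlmostHarmonic (A : V → V → ℝ≥0∞) (β : ℝ) (ξ : V → ℝ≥0∞) : Prop :=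
  (∀ v, ξ v ≠ ⊤) ∧
  (∀ v, v ∉ VInf A → ∑' w, A v w * ξ w = expb β * ξ v) ∧
  (∀ v, v ∈ VInf A → ∑' w, A v w * ξ w ≤ expb β * ξ v)

/-- A vector `ξ : V → [0,∞)` is `β`-harmonic for `A` if `∑_w A_{vw} ξ_w = e^β ξ_v`
for every vertex `v`. -/
def IsHarmonic (A : V → V → ℝ≥0∞) (β : ℝ) (ξ : V → ℝ≥0∞) : Prop :=
  (∀ v, ξ v ≠ ⊤) ∧ ∀ v, ∑' w, A v w * ξ w = expb β * ξ v

/-- The non-wandering vertices: those admitting a loop of positive length. -/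
def NW (A : V → V → ℝ≥0∞) : Set V :=
  {v | Relation.TransGen (fun a b => A a b ≠ 0) v v}

/-- Standing assumptions i)–iii): `A` is cofinal, the graph has no sinks, the entries of
`A` are finite and all powers of `A` have finite entries. -/
def Standing [DecidableEq V] (A : V → V → ℝ≥0∞) : Prop :=
  Cofinal A ∧ (∀ v, ∃ w, A v w ≠ 0) ∧ (∀ v w, A v w ≠ ⊤) ∧
    ∀ (n : ℕ) (v w : V), Apow A n v w ≠ ⊤

/-- A function `k` supported on `V_∞` is `β`-summable when
`∑_{u ∈ V_∞} ∑_n e^{-nβ} A^n_{uu} k_u < ∞`. -/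
def BSummable [DecidableEq V] (A : V → V → ℝ≥0∞) (β : ℝ) (k : V → ℝ≥0∞) : Prop :=
  (∀ u, u ∉ VInf A → k u = 0) ∧ (∑' u, ∑' n, expn β n * Apow A n u u * k u) ≠ ⊤

/-- `k̂_v = ∑_{u ∈ V_∞} ∑_n e^{-nβ} A^n_{vu} k_u` (for `k` supported on `V_∞`). -/
noncomputable def khat [DecidableEq V] (A : V → V → ℝ≥0∞) (β : ℝ) (k : V → ℝ≥0∞) (v : V) :
    ℝ≥0∞ :=
  ∑' u, ∑' n, expn β n * Apow A n v u * k u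

/-- The first-return quantities `r_{vw}(n)`: `r_{vw}(0) = 0`, `r_{vw}(1) = A_{vw}` and
`r_{vw}(n+1) = ∑_{u ≠ w} A_{vu} r_{uw}(n)` for `n ≥ 1`. -/
noncomputable def fr [DecidableEq V] (A : V → V → ℝ≥0∞) (w : V) : ℕ → V → ℝ≥0∞
  | 0 => fun _ => 0
  | 1 => fun v => A v w
  | n + 2 => fun v => ∑' u, if u = w then 0 else A v u * fr A w (n + 1) u

/-- The action `(B f)_v = ∑_w B_{vw} f_w` of a non-negative matrix on a non-negative vector. -/
noncomputable def matOp (B : V → V → ℝ≥0∞) (f : V → ℝ≥0∞) (v : V) : ℝ≥0∞ :=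
  ∑' w, B v w * f w

/-- The reduced vector of `ψ` on `C`: the least superharmonic vector dominating `ψ` on `C`. -/
noncomputable def reduced (B : V → V → ℝ≥0∞) (ψ : V → ℝ≥0∞) (C : Set V) : V → ℝ≥0∞ :=
  sInf {s | matOp B s ≤ s ∧ ∀ v ∈ C, ψ v ≤ s v}

/-- The Green kernel `∑_n B^n_{vw}`. -/
noncomputable def green [DecidableEq V] (B : V → V → ℝ≥0∞) (v w : V) : ℝ≥0∞ :=
  ∑' n : ℕ, (matOp B)^[n] (Pi.single w 1) v

/-- A set is negligible at infinity if the iterates of `B` on its reduced vector tend to zero. -/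
def NegligibleAtInfinity (B : V → V → ℝ≥0∞) (ψ : V → ℝ≥0∞) (C : Set V) : Prop :=
  ∀ v, Tendsto (fun n => (matOp B)^[n] (reduced B ψ C) v) atTop (nhds 0)

/-- There is a walk of `k` steps starting at `x` that avoids `D` and ends at a vertex having an
edge to a vertex that satisfies `Q`. -/
def EscapesIn (B : V → V → ℝ≥0∞) (D : Set V) (Q : V → Prop) : ℕ → V → Prop
  | 0, x => x ∉ D ∧ ∃ y, B x y ≠ 0 ∧ Q y
  | k + 1, x => x ∉ D ∧ ∃ y, B x y ≠ 0 ∧ EscapesIn B D Q k y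

section MatOp

variable {B : V → V → ℝ≥0∞}

theorem matOp_mono : Monotone (matOp B) := fun _ _ h v =>
  ENNReal.tsum_le_tsum fun w => mul_le_mul_right (h w) (B v w)

theorem matOp_add (f g : V → ℝ≥0∞) : matOp B (f + g) = matOp B f + matOp B g := by
  ext v
  simp only [matOp, Pi.add_apply, mul_add, ENNReal.tsum_add]

theorem matOp_smul (c : ℝ≥0∞) (f : V → ℝ≥0∞) : matOp B (c • f) = c • matOp B f := by
  ext v
  simp only [matOp, Pi.smul_apply, smul_eq_mul, ← ENNReal.tsum_mul_left]
  exact tsum_congr fun w => by ring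

theorem matOp_sub {f g : V → ℝ≥0∞} (hgf : g ≤ f) (hg : ∀ v, matOp B g v ≠ ⊤) :
    matOp B (f - g) = matOp B f - matOp B g := by
  have h : matOp B f = matOp B (f - g) + matOp B g := by
    rw [← matOp_add, tsub_add_cancel_of_le hgf]
  ext v
  rw [h]
  simp [ENNReal.add_sub_cancel_right (hg v)]

theorem matOp_tsum {ι : Type*} (f : ι → V → ℝ≥0∞) (v : V) :
    matOp B (fun u => ∑' i, f i u) v = ∑' i, matOp B (f i) v := by
  simp only [matOp, ← ENNReal.tsum_mul_left]
  exact ENNReal.tsum_comm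

theorem matOp_iSup {f : ℕ → V → ℝ≥0∞} (hf : Monotone f) (v : V) :
    matOp B (⨆ n, f n) v = ⨆ n, matOp B (f n) v := by
  simp only [matOp, ENNReal.tsum_eq_iSup_sum, iSup_apply, ENNReal.mul_iSup]
  rw [iSup_comm]
  congr 1
  ext s
  exact ENNReal.finsetSum_iSup_of_monotone fun w m n h => mul_le_mul_right (hf h w) (B v w)

theorem iterate_matOp_mono (n : ℕ) : Monotone (matOp B)^[n] := matOp_mono.iterate n

theorem iterate_matOp_add (n : ℕ) (f g : V → ℝ≥0∞) :
    (matOp B)^[n] (f + g) = (matOp B)^[n] f + (matOp B)^[n] g := by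
  induction n generalizing f g with
  | zero => rfl
  | succ n ih => simp only [Function.iterate_succ_apply, matOp_add, ih]

theorem iterate_matOp_smul (n : ℕ) (c : ℝ≥0∞) (f : V → ℝ≥0∞) :
    (matOp B)^[n] (c • f) = c • (matOp B)^[n] f := by
  induction n generalizing f with
  | zero => rfl
  | succ n ih => simp only [Function.iterate_succ_apply, matOp_smul, ih]

theorem iterate_matOp_tsum {ι : Type*} (n : ℕ) (f : ι → V → ℝ≥0∞) (v : V) :
    (matOp B)^[n] (fun u => ∑' i, f i u) v = ∑' i, (matOp B)^[n] (f i) v := by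
  induction n generalizing f with
  | zero => rfl
  | succ n ih =>
    simp only [Function.iterate_succ_apply]
    rw [← ih, ← funext (matOp_tsum f)]

theorem iterate_matOp_antitone {f : V → ℝ≥0∞} (hf : matOp B f ≤ f) :
    Antitone fun n => (matOp B)^[n] f :=
  antitone_nat_of_succ_le fun n => by
    rw [Function.iterate_succ_apply]
    exact iterate_matOp_mono n hf

theorem iterate_matOp_apply_eq_tsum [DecidableEq V] (n : ℕ) (f : V → ℝ≥0∞) (v : V) :
    (matOp B)^[n] f v = ∑' w, (matOp B)^[n] (Pi.single w 1) v * f w := by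
  have hf : f = fun u => ∑' w, (f w • Pi.single w (1 : ℝ≥0∞) : V → ℝ≥0∞) u := by
    ext u
    rw [tsum_eq_single u]
    · simp
    · intro w hw
      simp [hw.symm]
  conv_lhs => rw [hf]
  rw [iterate_matOp_tsum]
  exact tsum_congr fun w => by
    rw [iterate_matOp_smul, Pi.smul_apply, smul_eq_mul, mul_comm]

theorem iterate_matOp_green [DecidableEq V] (n : ℕ) (v w : V) :
    (matOp B)^[n] (fun u => green B u w) v =
      ∑' k, (matOp B)^[k + n] (Pi.single w 1) v := by
  unfold green
  rw [iterate_matOp_tsum]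
  exact tsum_congr fun k => by rw [← Function.iterate_add_apply, add_comm]

theorem one_le_green_self [DecidableEq V] (w : V) : 1 ≤ green B w w := by
  refine le_trans ?_ (ENNReal.le_tsum 0)
  simp

theorem matOp_green_le [DecidableEq V] (w : V) :
    matOp B (fun u => green B u w) ≤ fun u => green B u w := fun v => by
  refine (iterate_matOp_green 1 v w).trans_le ?_
  exact ENNReal.tsum_comp_le_tsum_of_injective (add_left_injective 1)
    fun k => (matOp B)^[k] (Pi.single w 1) v

theorem tendsto_iterate_matOp_green [DecidableEq V] {v w : V} (h : green B v w ≠ ⊤) :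
    Tendsto (fun n => (matOp B)^[n] (fun u => green B u w) v) atTop (nhds 0) := by
  simp only [iterate_matOp_green]
  exact ENNReal.tendsto_sum_nat_add _ h

/-- Riesz decomposition for a superharmonic vector without harmonic part. -/
theorem eq_tsum_green_of_tendsto_zero [DecidableEq V] {r : V → ℝ≥0∞} (hr : matOp B r ≤ r) (v : V)
    (h0 : Tendsto (fun n => (matOp B)^[n] r v) atTop (nhds 0)) :
    r v = ∑' w, green B v w * (r w - matOp B r w) := by
  have hsplit : ∀ n, r v = ∑ k ∈ Finset.range n, (matOp B)^[k] (r - matOp B r) v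
      + (matOp B)^[n] r v := by
    intro n
    induction n with
    | zero => simp
    | succ n ih =>
      have h : (matOp B)^[n] r
          = (matOp B)^[n] (r - matOp B r) + (matOp B)^[n + 1] r := by
        rw [Function.iterate_succ_apply, ← iterate_matOp_add, tsub_add_cancel_of_le hr]
      rw [Finset.sum_range_succ, add_assoc, ← Pi.add_apply, ← h]
      exact ih
  have hlim := (ENNReal.tendsto_nat_tsum
    fun k => (matOp B)^[k] (r - matOp B r) v).add h0
  rw [add_zero] at hlim
  have hrv := tendsto_nhds_unique (tendsto_const_nhds.congr hsplit) hlim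
  rw [hrv]
  simp only [green, ← ENNReal.tsum_mul_right]
  rw [ENNReal.tsum_comm]
  exact tsum_congr fun k => iterate_matOp_apply_eq_tsum k _ v

end MatOp

section Reduced

variable {B : V → V → ℝ≥0∞} {ψ : V → ℝ≥0∞}

theorem reduced_le {C : Set V} {s : V → ℝ≥0∞} (hs : matOp B s ≤ s) (hC : ∀ v ∈ C, ψ v ≤ s v) :
    reduced B ψ C ≤ s := sInf_le ⟨hs, hC⟩

theorem le_reduced {C : Set V} {v : V} (hv : v ∈ C) : ψ v ≤ reduced B ψ C v := by
  rw [reduced, sInf_apply]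
  exact le_iInf fun s => s.2.2 v hv

theorem matOp_reduced_le (C : Set V) : matOp B (reduced B ψ C) ≤ reduced B ψ C :=
  le_sInf fun _ hs => (matOp_mono (sInf_le hs)).trans hs.1

theorem matOp_reduced_of_notMem {C : Set V} {v : V} (hv : v ∉ C) :
    matOp B (reduced B ψ C) v = reduced B ψ C v := by
  classical
  refine le_antisymm (matOp_reduced_le C v) ?_
  have hle : C.piecewise (reduced B ψ C) (matOp B (reduced B ψ C)) ≤ reduced B ψ C := by
    intro u
    by_cases hu : u ∈ C
    · simp [hu]
    · simpa [hu] using matOp_reduced_le C u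
  have h := reduced_le (B := B) (ψ := ψ) (C := C)
    (s := C.piecewise (reduced B ψ C) (matOp B (reduced B ψ C))) ?_ ?_ v
  · simpa [hv] using h
  · intro u
    refine (matOp_mono hle u).trans ?_
    by_cases hu : u ∈ C
    · simpa [hu] using matOp_reduced_le C u
    · simp [hu]
  · intro u hu
    simpa [hu] using le_reduced hu

theorem reduced_le_self (hψ : matOp B ψ = ψ) (C : Set V) : reduced B ψ C ≤ ψ :=
  reduced_le hψ.le fun _ _ => le_rfl

theorem reduced_mono {C D : Set V} (h : C ⊆ D) : reduced B ψ C ≤ reduced B ψ D :=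
  reduced_le (matOp_reduced_le D) fun _ hv => le_reduced (h hv)

theorem reduced_empty : reduced B ψ ∅ = 0 :=
  le_antisymm (reduced_le (fun v => by simp [matOp]) fun _ hv => hv.elim) zero_le

theorem reduced_union_le (C D : Set V) :
    reduced B ψ (C ∪ D) ≤ reduced B ψ C + reduced B ψ D := by
  refine reduced_le ?_ ?_
  · rw [matOp_add]
    exact add_le_add (matOp_reduced_le C) (matOp_reduced_le D)
  · rintro v (hv | hv)
    · exact (le_reduced hv).trans le_self_add
    · exact (le_reduced hv).trans le_add_self

theorem reduced_iUnion_of_monotone {C : ℕ → Set V} (hC : Monotone C) :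
    reduced B ψ (⋃ n, C n) = ⨆ n, reduced B ψ (C n) := by
  refine le_antisymm (reduced_le ?_ ?_) (iSup_le fun n => reduced_mono (Set.subset_iUnion C n))
  · intro v
    rw [matOp_iSup fun m n h => reduced_mono (hC h), iSup_apply]
    exact iSup_mono fun n => matOp_reduced_le (C n) v
  · intro v hv
    obtain ⟨n, hn⟩ := Set.mem_iUnion.1 hv
    rw [iSup_apply]
    exact (le_reduced hn).trans (le_iSup (fun n => reduced B ψ (C n) v) n)

theorem reduced_eq_self_of_smul_le (hψ : matOp B ψ = ψ) (hfin : ∀ v, ψ v ≠ ⊤) {C : Set V}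
    {c : ℝ≥0∞} (hc0 : c ≠ 0) (hc1 : c < 1) (hc : c • ψ ≤ reduced B ψ C) :
    reduced B ψ C = ψ := by
  have hc' : 1 - c ≠ 0 := (tsub_pos_of_lt hc1).ne'
  have hct : 1 - c ≠ ⊤ := by finiteness
  have hcψ : matOp B (c • ψ) = c • ψ := by rw [matOp_smul, hψ]
  have hcfin : ∀ v, (c • ψ) v ≠ ⊤ := fun v => ENNReal.mul_ne_top hc1.ne_top (hfin v)
  have hs : reduced B ψ C ≤ (1 - c)⁻¹ • (reduced B ψ C - c • ψ) := by
    refine reduced_le ?_ ?_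
    · rw [matOp_smul, matOp_sub hc (by rwa [hcψ]), hcψ]
      intro v
      exact mul_le_mul_right (tsub_le_tsub_right (matOp_reduced_le C v) _) _
    · intro v hv
      have h : (1 - c) * ψ v ≤ reduced B ψ C v - c * ψ v := by
        rw [ENNReal.sub_mul fun _ _ => hfin v, one_mul]
        exact tsub_le_tsub_right (le_reduced hv) _
      calc ψ v = (1 - c)⁻¹ * ((1 - c) * ψ v) := by
            rw [← mul_assoc, ENNReal.inv_mul_cancel hc' hct, one_mul]
        _ ≤ _ := mul_le_mul_right h _
  refine le_antisymm (reduced_le_self hψ C) fun v => ?_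
  have hrfin : reduced B ψ C v ≠ ⊤ := ne_top_of_le_ne_top (hfin v) (reduced_le_self hψ C v)
  have h1 : (1 - c) * reduced B ψ C v + c * ψ v ≤ reduced B ψ C v := by
    calc _ ≤ (1 - c) * ((1 - c)⁻¹ * (reduced B ψ C v - c * ψ v)) + c * ψ v := by
          gcongr; exact hs v
      _ = reduced B ψ C v := by
          rw [← mul_assoc, ENNReal.mul_inv_cancel hc' hct, one_mul]
          exact tsub_add_cancel_of_le (hc v)
  have h2 : (1 - c) * reduced B ψ C v + c * ψ v
      ≤ (1 - c) * reduced B ψ C v + c * reduced B ψ C v := by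
    rwa [← add_mul, tsub_add_cancel_of_le hc1.le, one_mul]
  have h3 := (ENNReal.add_le_add_iff_left (ENNReal.mul_ne_top hct hrfin)).1 h2
  exact (ENNReal.mul_le_mul_iff_right hc0 hc1.ne_top).1 h3

theorem matOp_iInf_iterate (hψ : matOp B ψ = ψ) (hfin : ∀ v, ψ v ≠ ⊤) {r : V → ℝ≥0∞}
    (hr : matOp B r ≤ r) (hrψ : r ≤ ψ) :
    matOp B (⨅ n, (matOp B)^[n] r) = ⨅ n, (matOp B)^[n] r := by
  have hanti := iterate_matOp_antitone hr
  have hle : (⨅ n, (matOp B)^[n] r) ≤ ψ := (iInf_le _ 0).trans hrψ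
  have hopψ : matOp B (⨅ n, (matOp B)^[n] r) ≤ ψ := (matOp_mono hle).trans hψ.le
  have hnψ : ∀ n, (matOp B)^[n] r ≤ ψ := fun n => (hanti (Nat.zero_le n)).trans hrψ
  have hsub : ∀ v, ψ v - matOp B (⨅ n, (matOp B)^[n] r) v
      = ψ v - (⨅ n, (matOp B)^[n] r) v := by
    intro v
    have h1 : ψ - (⨅ n, (matOp B)^[n] r) = ⨆ n, (ψ - (matOp B)^[n] r) := by
      ext u
      simp only [Pi.sub_apply, iInf_apply, iSup_apply, ENNReal.sub_iInf]
    have h2 := matOp_sub hle fun u => ne_top_of_le_ne_top (hfin u) (hopψ u)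
    have h3 := congrFun h2 v
    rw [h1, matOp_iSup (fun m n h => tsub_le_tsub_left (hanti h) ψ), hψ] at h3
    simp only [Pi.sub_apply] at h3
    rw [← h3, iInf_apply, ENNReal.sub_iInf]
    have h4 : ∀ n, matOp B (ψ - (matOp B)^[n] r) v = ψ v - (matOp B)^[n + 1] r v := by
      intro n
      rw [matOp_sub (hnψ n), hψ, Function.iterate_succ_apply', Pi.sub_apply]
      intro u
      exact ne_top_of_le_ne_top (hfin u) (((matOp_mono (hnψ n)).trans hψ.le) u)
    simp only [h4]
    refine le_antisymm (iSup_le fun n => le_iSup (fun n => ψ v - (matOp B)^[n] r v) (n + 1))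
      (iSup_mono fun n => tsub_le_tsub_left (hanti n.le_succ v) _)
  ext v
  have h := hsub v
  rwa [ENNReal.sub_right_inj (hfin v) (hopψ v) (hle v)] at h

theorem negligible_or_reduced_eq (hψ : matOp B ψ = ψ) (hfin : ∀ v, ψ v ≠ ⊤)
    (hmin : ∀ h : V → ℝ≥0∞, matOp B h = h → h ≤ ψ → ∃ c : ℝ≥0∞, h = c • ψ) (C : Set V) :
    NegligibleAtInfinity B ψ C ∨ reduced B ψ C = ψ := by
  obtain ⟨c, hc⟩ := hmin _ (matOp_iInf_iterate hψ hfin (matOp_reduced_le C) (reduced_le_self hψ C))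
    ((iInf_le _ 0).trans (reduced_le_self hψ C))
  rcases eq_or_ne c 0 with rfl | hc0
  · left
    intro v
    have h : (⨅ n, (matOp B)^[n] (reduced B ψ C) v) = 0 := by
      simpa using congrFun hc v
    rw [← h]
    exact tendsto_atTop_iInf fun m n hmn => iterate_matOp_antitone (matOp_reduced_le C) hmn v
  · right
    have hd0 : min c 2⁻¹ ≠ 0 := (lt_min hc0.bot_lt (by simp)).ne'
    refine reduced_eq_self_of_smul_le hψ hfin hd0
      ((min_le_right _ _).trans_lt ENNReal.one_half_lt_one) fun v => ?_
    calc min c 2⁻¹ * ψ v ≤ c * ψ v := mul_le_mul_left (min_le_left _ _) _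
      _ = (⨅ n, (matOp B)^[n] (reduced B ψ C)) v := by rw [hc]; rfl
      _ ≤ _ := iInf_le (fun n => (matOp B)^[n] (reduced B ψ C)) 0 v

theorem negligibleAtInfinity_of_le {C : Set V} {s : V → ℝ≥0∞} (h : reduced B ψ C ≤ s)
    (hs : ∀ v, Tendsto (fun n => (matOp B)^[n] s v) atTop (nhds 0)) :
    NegligibleAtInfinity B ψ C := fun v =>
  tendsto_of_tendsto_of_tendsto_of_le_of_le tendsto_const_nhds (hs v) (fun _ => zero_le)
    fun n => iterate_matOp_mono n h v

theorem negligibleAtInfinity_empty : NegligibleAtInfinity B ψ ∅ := fun v => by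
  have h : ∀ n, (matOp B)^[n] (0 : V → ℝ≥0∞) = 0 := fun n =>
    Function.iterate_fixed (by ext; simp [matOp]) n
  simp [reduced_empty, h]

theorem NegligibleAtInfinity.union {C D : Set V} (hC : NegligibleAtInfinity B ψ C)
    (hD : NegligibleAtInfinity B ψ D) : NegligibleAtInfinity B ψ (C ∪ D) := by
  refine negligibleAtInfinity_of_le (reduced_union_le C D) fun v => ?_
  simp only [iterate_matOp_add]
  simpa using (hC v).add (hD v)

theorem negligibleAtInfinity_singleton [DecidableEq V] (hfin : ∀ v, ψ v ≠ ⊤)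
    (hgreen : ∀ v w, green B v w ≠ ⊤) (w : V) : NegligibleAtInfinity B ψ {w} := by
  refine negligibleAtInfinity_of_le (s := ψ w • fun u => green B u w) (reduced_le ?_ ?_) ?_
  · rw [matOp_smul]
    exact fun v => mul_le_mul_right (matOp_green_le w v) _
  · rintro v rfl
    simpa using mul_le_mul_right (one_le_green_self (B := B) v) (ψ v)
  · intro v
    simp only [iterate_matOp_smul]
    simpa using ENNReal.Tendsto.const_mul (tendsto_iterate_matOp_green (hgreen v w))
      (Or.inr (hfin w))

theorem Set.Finite.negligibleAtInfinity [DecidableEq V] (hfin : ∀ v, ψ v ≠ ⊤)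
    (hgreen : ∀ v w, green B v w ≠ ⊤) {C : Set V} (hC : C.Finite) :
    NegligibleAtInfinity B ψ C := by
  induction C, hC using Set.Finite.induction_on with
  | empty => exact negligibleAtInfinity_empty
  | insert _ _ ih =>
    rw [Set.insert_eq]
    exact (negligibleAtInfinity_singleton hfin hgreen _).union ih

theorem mul_reduced_le_mul_reduced [Countable V] [DecidableEq V] (hfin : ∀ v, ψ v ≠ ⊤)
    (hgreen : ∀ v w, green B v w ≠ ⊤) {C : Set V} {a b : ℝ≥0∞} {u v : V}
    (h : ∀ w ∈ C, a * green B u w ≤ b * green B v w) :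
    a * reduced B ψ C u ≤ b * reduced B ψ C v := by
  obtain ⟨e, he⟩ := exists_injective_nat V
  let F : ℕ → Set V := fun n => {w | w ∈ C ∧ e w < n}
  have hF : Monotone F := fun m n hmn w hw => ⟨hw.1, hw.2.trans_le hmn⟩
  have hFC : ⋃ n, F n = C := by
    ext w
    simp only [F, Set.mem_iUnion, Set.mem_ofPred_eq]
    exact ⟨fun ⟨_, hw⟩ => hw.1, fun hw => ⟨e w + 1, hw, Nat.lt_succ_self _⟩⟩
  have hpot : ∀ n v, reduced B ψ (F n) v = ∑' w, green B v w *
      (reduced B ψ (F n) w - matOp B (reduced B ψ (F n)) w) := fun n v =>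
    eq_tsum_green_of_tendsto_zero (matOp_reduced_le _) v
      (Set.Finite.negligibleAtInfinity hfin hgreen
        (((Set.finite_lt_nat n).preimage he.injOn).subset fun w hw => hw.2) v)
  rw [← hFC, reduced_iUnion_of_monotone hF, iSup_apply, iSup_apply, ENNReal.mul_iSup,
    ENNReal.mul_iSup]
  refine iSup_mono fun n => ?_
  rw [hpot n u, hpot n v, ← ENNReal.tsum_mul_left, ← ENNReal.tsum_mul_left]
  refine ENNReal.tsum_le_tsum fun w => ?_
  rw [← mul_assoc, ← mul_assoc]
  by_cases hw : w ∈ F n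
  · exact mul_le_mul_left (h w hw.1) _
  · simp [matOp_reduced_of_notMem hw]

end Reduced

section Walk

variable {B : V → V → ℝ≥0∞} {ψ : V → ℝ≥0∞}

theorem exists_escapesIn (hψ : matOp B ψ = ψ) {D D' : Set V}
    (hD' : NegligibleAtInfinity B ψ D') {x : V} (hx : reduced B ψ D x < ψ x) :
    ∃ k, EscapesIn B D (fun y => reduced B ψ D' y < ψ y) k x := by
  by_contra! hcon
  have key : ∀ n y, (∀ k, ¬ EscapesIn B D (fun y => reduced B ψ D' y < ψ y) k y) →
      ψ y ≤ reduced B ψ D y + (matOp B)^[n + 1] (reduced B ψ D') y := by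
    intro n
    induction n with
    | zero =>
      intro y hy
      by_cases hyD : y ∈ D
      · exact (le_reduced hyD).trans le_self_add
      refine le_trans ?_ le_add_self
      rw [← congrFun hψ y]
      refine ENNReal.tsum_le_tsum fun w => ?_
      by_cases hw : B y w = 0
      · simp [hw]
      exact mul_le_mul_right (not_lt.1 fun h => hy 0 ⟨hyD, w, hw, h⟩) _
    | succ n ih =>
      intro y hy
      by_cases hyD : y ∈ D
      · exact (le_reduced hyD).trans le_self_add
      rw [Function.iterate_succ_apply', ← matOp_reduced_of_notMem hyD, ← Pi.add_apply,
        ← matOp_add]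
      conv_lhs => rw [← congrFun hψ y]
      refine ENNReal.tsum_le_tsum fun w => ?_
      by_cases hw : B y w = 0
      · simp [hw]
      exact mul_le_mul_right (ih w fun k hk => hy (k + 1) ⟨hyD, w, hw, hk⟩) _
  have hlim := ((tendsto_add_atTop_iff_nat 1).2 (hD' x)).const_add (reduced B ψ D x)
  rw [add_zero] at hlim
  exact hx.not_ge (ge_of_tendsto' hlim fun n => key n x hcon)

theorem exists_walk_of_escapesIn {D : ℕ → Set V} (hD : Monotone D) {Q : ℕ → V → Prop}
    (hQ : ∀ n x, Q n x → ∃ k, EscapesIn B (D n) (Q (n + 1)) k x) {x₀ : V} (hx₀ : Q 0 x₀) :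
    ∃ t : ℕ → V, t 0 = x₀ ∧ (∀ i, B (t i) (t (i + 1)) ≠ 0) ∧
      ∀ n, ∀ᶠ i in atTop, t i ∉ D n := by
  let S := {s : ℕ × ℕ × V // EscapesIn B (D s.1) (Q (s.1 + 1)) s.2.1 s.2.2}
  have hstep : ∀ s : S, ∃ s' : S, B s.1.2.2 s'.1.2.2 ≠ 0 ∧
      ((s.1.2.1 = 0 ∧ s'.1.1 = s.1.1 + 1) ∨ (s.1.2.1 = s'.1.2.1 + 1 ∧ s'.1.1 = s.1.1)) := by
    rintro ⟨⟨n, k, x⟩, hs⟩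
    cases k with
    | zero =>
      obtain ⟨-, y, hy, hQy⟩ := hs
      obtain ⟨k, hk⟩ := hQ _ _ hQy
      exact ⟨⟨(n + 1, k, y), hk⟩, hy, Or.inl ⟨rfl, rfl⟩⟩
    | succ k =>
      obtain ⟨-, y, hy, hk⟩ := hs
      exact ⟨⟨(n, k, y), hk⟩, hy, Or.inr ⟨rfl, rfl⟩⟩
  choose next hnext using hstep
  obtain ⟨k₀, hk₀⟩ := hQ 0 x₀ hx₀
  let s : ℕ → S := fun i => next^[i] ⟨(0, k₀, x₀), hk₀⟩
  have hs : ∀ i, s (i + 1) = next (s i) := fun i => Function.iterate_succ_apply' _ _ _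
  have hmono : Monotone fun i => (s i).1.1 := monotone_nat_of_le_succ fun i => by
    rw [hs]
    rcases (hnext (s i)).2 with h | h <;> omega
  have hgrow : ∀ k i, (s i).1.2.1 = k → ∃ j, (s i).1.1 < (s j).1.1 := by
    intro k
    induction k with
    | zero =>
      intro i hi
      refine ⟨i + 1, ?_⟩
      rw [hs]
      rcases (hnext (s i)).2 with h | h <;> omega
    | succ k ih =>
      intro i hi
      have h := (hnext (s i)).2
      rw [← hs] at h
      obtain ⟨j, hj⟩ := ih (i + 1) (by omega)
      exact ⟨j, by omega⟩
  have hunb : ∀ n, ∃ i, n ≤ (s i).1.1 := by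
    intro n
    induction n with
    | zero => exact ⟨0, Nat.zero_le _⟩
    | succ n ih =>
      obtain ⟨i, hi⟩ := ih
      obtain ⟨j, hj⟩ := hgrow _ i rfl
      exact ⟨j, by omega⟩
  refine ⟨fun i => (s i).1.2.2, rfl, fun i => ?_, fun n => ?_⟩
  · simp only [hs]
    exact (hnext (s i)).1
  · obtain ⟨i, hi⟩ := hunb n
    filter_upwards [eventually_ge_atTop i] with j hj
    refine fun hmem => ?_
    have hnot : (s j).1.2.2 ∉ D (s j).1.1 := by
      have h := (s j).2
      generalize (s j).1.2.1 = k at h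
      cases k with
      | zero => exact h.1
      | succ k => exact h.1
    exact hnot (hD (hi.trans (hmono hj)) hmem)

theorem exists_walk_eventually_notMem (hψ : matOp B ψ = ψ) {ι : Type*} [Countable ι]
    {C : ι → Set V} (hC : ∀ i, NegligibleAtInfinity B ψ (C i)) {x₀ : V} (hx₀ : ψ x₀ ≠ 0) :
    ∃ t : ℕ → V, t 0 = x₀ ∧ (∀ i, B (t i) (t (i + 1)) ≠ 0) ∧
      ∀ i, ∀ᶠ k in atTop, t k ∉ C i := by
  obtain ⟨e, he⟩ := exists_injective_nat ι
  let D : ℕ → Set V := fun n => {v | ∃ i, e i < n ∧ v ∈ C i}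
  have hD : Monotone D := fun m n hmn v ⟨i, hi, hv⟩ => ⟨i, hi.trans_le hmn, hv⟩
  have hD0 : D 0 = ∅ := by
    ext v
    simp [D]
  have hneg : ∀ n, NegligibleAtInfinity B ψ (D n) := by
    intro n
    induction n with
    | zero => rw [hD0]; exact negligibleAtInfinity_empty
    | succ n ih =>
      by_cases hn : ∃ i, e i = n
      · obtain ⟨i, hi⟩ := hn
        refine negligibleAtInfinity_of_le (reduced_mono ?_) (ih.union (hC i))
        rintro v ⟨j, hj, hv⟩
        rcases Nat.lt_succ_iff_lt_or_eq.1 hj with hj | hj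
        · exact Or.inl ⟨j, hj, hv⟩
        · exact Or.inr (he (hj.trans hi.symm) ▸ hv)
      · refine negligibleAtInfinity_of_le (reduced_mono ?_) ih
        rintro v ⟨j, hj, hv⟩
        rcases Nat.lt_succ_iff_lt_or_eq.1 hj with hj | hj
        · exact ⟨j, hj, hv⟩
        · exact (hn ⟨j, hj⟩).elim
  obtain ⟨t, ht0, hedge, hav⟩ := exists_walk_of_escapesIn hD
    (Q := fun n x => reduced B ψ (D n) x < ψ x)
    (fun n x hx => exists_escapesIn hψ (hneg (n + 1)) hx) (x₀ := x₀)
    (by simpa [hD0, reduced_empty] using hx₀.bot_lt)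
  refine ⟨t, ht0, hedge, fun i => ?_⟩
  filter_upwards [hav (e i + 1)] with k hk hmem
  exact hk ⟨i, Nat.lt_succ_self _, hmem⟩

/-- Loop erasure of a walk that visits each vertex finitely often. -/
theorem exists_strictMono_injective_subwalk {t : ℕ → V} (ht : ∀ v, ∀ᶠ k in atTop, t k ≠ v) :
    ∃ τ : ℕ → ℕ, StrictMono τ ∧ t (τ 0) = t 0 ∧ (∀ k, t (τ (k + 1)) = t (τ k + 1)) ∧
      Function.Injective fun k => t (τ k) := by
  have hlast : ∀ i, ∃ j, i ≤ j ∧ t j = t i ∧ ∀ l, j < l → t l ≠ t i := by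
    classical
    intro i
    obtain ⟨N, hN⟩ := eventually_atTop.1 (ht (t i))
    have hi : i ≤ N := by
      by_contra! h
      exact hN i h.le rfl
    refine ⟨Nat.findGreatest (fun j => t j = t i) N, Nat.le_findGreatest hi rfl,
      Nat.findGreatest_spec (P := fun j => t j = t i) hi rfl, fun l hl => ?_⟩
    rcases le_or_gt l N with h | h
    · exact Nat.findGreatest_is_greatest hl h
    · exact hN l h.le
  choose L hLle hLeq hLlast using hlast
  let τ : ℕ → ℕ := fun k => (fun i => L (i + 1))^[k] (L 0)
  have hτ : ∀ k, τ (k + 1) = L (τ k + 1) := fun k => Function.iterate_succ_apply' _ _ _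
  have hmono : StrictMono τ := strictMono_nat_of_lt_succ fun k => by
    rw [hτ]
    exact hLle _
  have hτlast : ∀ k l, τ k < l → t l ≠ t (τ k) := by
    intro k l hl
    cases k with
    | zero =>
      have h := hLlast 0 l hl
      rwa [← hLeq 0] at h
    | succ k =>
      rw [hτ] at hl ⊢
      rw [hLeq]
      exact hLlast _ l hl
  refine ⟨τ, hmono, hLeq 0, fun k => by rw [hτ, hLeq], ?_⟩
  intro k l hkl
  rcases lt_trichotomy k l with h | h | h
  · exact (hτlast k _ (hmono h) hkl.symm).elim
  · exact h
  · exact (hτlast l _ (hmono h) hkl).elim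

end Walk

/-- An extremal harmonic vector is the limit of normalized Green kernels along a simple path. -/
theorem exists_simple_path_tendsto_green_div [Countable V] [DecidableEq V] {B : V → V → ℝ≥0∞}
    {ψ : V → ℝ≥0∞} (hψ : matOp B ψ = ψ) (hfin : ∀ v, ψ v ≠ ⊤)
    (hmin : ∀ h : V → ℝ≥0∞, matOp B h = h → h ≤ ψ → ∃ c : ℝ≥0∞, h = c • ψ)
    (hgreen : ∀ v w, green B v w ≠ ⊤) {v₀ : V} (hv₀ : ψ v₀ = 1) :
    ∃ t : ℕ → V, t 0 = v₀ ∧ (∀ i, B (t i) (t (i + 1)) ≠ 0) ∧ Function.Injective t ∧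
      ∀ v, Tendsto (fun k => green B v (t k) / green B v₀ (t k)) atTop (nhds (ψ v)) := by
  let c : ℚ → ℝ≥0∞ := fun q => ((q : ℝ).toNNReal : ℝ≥0∞)
  let C : V ⊕ (V × ℚ) ⊕ (V × ℚ) → Set V := Sum.elim (fun w => {w}) <| Sum.elim
    (fun p => {w | ψ p.1 < c p.2 ∧ c p.2 * green B v₀ w ≤ green B p.1 w})
    (fun p => {w | c p.2 < ψ p.1 ∧ green B p.1 w ≤ c p.2 * green B v₀ w})
  have hC : ∀ i, NegligibleAtInfinity B ψ (C i) := by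
    rintro (w | ⟨v, q⟩ | ⟨v, q⟩)
    · exact negligibleAtInfinity_singleton hfin hgreen w
    · by_cases hq : ψ v < c q
      · refine (negligible_or_reduced_eq hψ hfin hmin _).resolve_right fun hr => hq.not_ge ?_
        have h := mul_reduced_le_mul_reduced (a := c q) (b := 1) (u := v₀) (v := v) hfin hgreen
          (C := C (Sum.inr (Sum.inl (v, q)))) fun w hw => by simpa using hw.2
        rwa [hr, hv₀, mul_one, one_mul] at h
      · have h : C (Sum.inr (Sum.inl (v, q))) = ∅ := by
          ext w
          simp [C, hq]
        rw [h]
        exact negligibleAtInfinity_empty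
    · by_cases hq : c q < ψ v
      · refine (negligible_or_reduced_eq hψ hfin hmin _).resolve_right fun hr => hq.not_ge ?_
        have h := mul_reduced_le_mul_reduced (a := 1) (b := c q) (u := v) (v := v₀) hfin hgreen
          (C := C (Sum.inr (Sum.inr (v, q)))) fun w hw => by simpa using hw.2
        rwa [hr, hv₀, mul_one, one_mul] at h
      · have h : C (Sum.inr (Sum.inr (v, q))) = ∅ := by
          ext w
          simp [C, hq]
        rw [h]
        exact negligibleAtInfinity_empty
  obtain ⟨t, ht0, hedge, hav⟩ := exists_walk_eventually_notMem hψ hC (x₀ := v₀) (by simp [hv₀])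
  obtain ⟨τ, hτ, hτ0, hτs, hinj⟩ :=
    exists_strictMono_injective_subwalk fun v => by simpa [C] using hav (Sum.inl v)
  refine ⟨fun k => t (τ k), hτ0.trans ht0, fun i => ?_, hinj, fun v => ?_⟩
  · simp only [hτs]
    exact hedge _
  · refine Tendsto.comp (g := fun k => green B v (t k) / green B v₀ (t k)) ?_ hτ.tendsto_atTop
    refine tendsto_order.2 ⟨fun a ha => ?_, fun a ha => ?_⟩
    · obtain ⟨q, -, haq, hq⟩ := ENNReal.lt_iff_exists_rat_btwn.1 ha
      filter_upwards [hav (Sum.inr (Sum.inr (v, q)))] with k hk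
      refine haq.trans ((ENNReal.lt_div_iff_mul_lt (Or.inr ENNReal.coe_ne_top)
        (Or.inl (hgreen _ _))).2 ?_)
      exact not_le.1 fun h => hk ⟨hq, h⟩
    · obtain ⟨q, -, hq, hqa⟩ := ENNReal.lt_iff_exists_rat_btwn.1 ha
      filter_upwards [hav (Sum.inr (Sum.inl (v, q)))] with k hk
      refine lt_trans (ENNReal.div_lt_of_lt_mul ?_) hqa
      exact not_le.1 fun h => hk ⟨hq, h⟩

section Harmonic

variable {A : V → V → ℝ≥0∞} {β : ℝ}

theorem expb_ne_zero (β : ℝ) : expb β ≠ 0 := by simp [expb, Real.exp_pos]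

theorem expb_ne_top (β : ℝ) : expb β ≠ ⊤ := ENNReal.ofReal_ne_top

theorem expn_succ (β : ℝ) (n : ℕ) : expn β (n + 1) = (expb β)⁻¹ * expn β n := by
  rw [expb, ← ENNReal.ofReal_inv_of_pos (Real.exp_pos β), expn, expn,
    ← ENNReal.ofReal_mul (by positivity), ← Real.exp_neg, ← Real.exp_add]
  congr 2
  push_cast
  ring

theorem matOp_expb_inv_mul (f : V → ℝ≥0∞) (v : V) :
    matOp (fun v w => (expb β)⁻¹ * A v w) f v = (expb β)⁻¹ * ∑' w, A v w * f w := by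
  simp only [matOp, mul_assoc, ENNReal.tsum_mul_left]

theorem matOp_eq_iff {f : V → ℝ≥0∞} :
    matOp (fun v w => (expb β)⁻¹ * A v w) f = f ↔
      ∀ v, ∑' w, A v w * f w = expb β * f v := by
  refine funext_iff.trans (forall_congr' fun v => ?_)
  rw [matOp_expb_inv_mul]
  constructor <;> intro h
  · rw [← h, ← mul_assoc, ENNReal.mul_inv_cancel (expb_ne_zero β) (expb_ne_top β), one_mul]
  · rw [h, ← mul_assoc, ENNReal.inv_mul_cancel (expb_ne_zero β) (expb_ne_top β), one_mul]

theorem green_expb_inv_mul [DecidableEq V] (v w : V) :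
    green (fun v w => (expb β)⁻¹ * A v w) v w = ∑' n : ℕ, Apow A n v w * expn β n := by
  refine tsum_congr fun n => ?_
  induction n generalizing v with
  | zero => simp [Apow, expn, Pi.single_apply]
  | succ n ih =>
    rw [Function.iterate_succ_apply', matOp_expb_inv_mul]
    simp only [ih, Apow, expn_succ]
    rw [mul_left_comm, ← ENNReal.tsum_mul_right]
    exact congrArg _ (tsum_congr fun u => (mul_assoc _ _ _).symm)

theorem IsHarmonic.isAlmostHarmonic {ξ : V → ℝ≥0∞} (h : IsHarmonic A β ξ) :
    IsAlmostHarmonic A β ξ :=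
  ⟨h.1, fun v _ => h.2 v, fun v _ => (h.2 v).le⟩

theorem eq_zero_of_harmonic_of_cofinal (hA : Cofinal A) {h : V → ℝ≥0∞}
    (hh : ∀ v, ∑' w, A v w * h w = expb β * h v) {v₀ : V} (h0 : h v₀ = 0) : h = 0 := by
  have hher : Hereditary A {v | h v = 0} := by
    intro v w hv hvw
    have hsum := hh v
    rw [show h v = 0 from hv, mul_zero, ENNReal.tsum_eq_zero] at hsum
    exact (mul_eq_zero.1 (hsum w)).resolve_left hvw
  have hsat : Saturated A {v | h v = 0} := by
    intro v _ hw
    have hsum : ∑' w, A v w * h w = 0 := ENNReal.tsum_eq_zero.2 fun w => by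
      by_cases hvw : A v w = 0
      · simp [hvw]
      · rw [show h w = 0 from hw w hvw, mul_zero]
    rw [hh v] at hsum
    exact (mul_eq_zero.1 hsum).resolve_left (expb_ne_zero β)
  rcases hA _ hher hsat with hH | hH
  · exact (Set.eq_empty_iff_forall_notMem.1 hH v₀ h0).elim
  · exact funext fun v => (Set.eq_univ_iff_forall.1 hH v :)

theorem eq_smul_of_extremal (hA : Cofinal A) {v₀ : V} {ψ : V → ℝ≥0∞} (hψ : IsHarmonic A β ψ)
    (hψ0 : ψ v₀ = 1)
    (hext : ∀ ξ η : V → ℝ≥0∞, IsAlmostHarmonic A β ξ → ξ v₀ = 1 →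
      IsAlmostHarmonic A β η → η v₀ = 1 → ∀ t : ℝ, 0 < t → t < 1 →
      (∀ v, ψ v = ENNReal.ofReal t * ξ v + ENNReal.ofReal (1 - t) * η v) →
      ξ = ψ ∧ η = ψ)
    {h : V → ℝ≥0∞} (hh : matOp (fun v w => (expb β)⁻¹ * A v w) h = h) (hle : h ≤ ψ) :
    ∃ c : ℝ≥0∞, h = c • ψ := by
  set B : V → V → ℝ≥0∞ := fun v w => (expb β)⁻¹ * A v w with hB
  have hBψ : matOp B ψ = ψ := matOp_eq_iff.2 hψ.2
  have hfin : ∀ v, h v ≠ ⊤ := fun v => ne_top_of_le_ne_top (hψ.1 v) (hle v)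
  have hd : matOp B (ψ - h) = ψ - h := by
    rw [matOp_sub hle (by rwa [hh]), hBψ, hh]
  have hsmul : ∀ (a : ℝ≥0∞) (f : V → ℝ≥0∞), a ≠ ⊤ → (∀ v, f v ≠ ⊤) → matOp B f = f →
      IsAlmostHarmonic A β (a • f) := fun a f ha hf hBf =>
    IsHarmonic.isAlmostHarmonic ⟨fun v => ENNReal.mul_ne_top ha (hf v),
      matOp_eq_iff.1 (by rw [← hB, matOp_smul, hBf])⟩
  have hc1 : h v₀ ≤ 1 := hψ0 ▸ hle v₀
  rcases eq_or_ne (h v₀) 0 with h0 | h0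
  · exact ⟨0, by rw [eq_zero_of_harmonic_of_cofinal hA (matOp_eq_iff.1 hh) h0, zero_smul]⟩
  rcases hc1.eq_or_lt with h1 | h1
  · have hz := eq_zero_of_harmonic_of_cofinal hA (matOp_eq_iff.1 hd) (v₀ := v₀)
      (by simp [hψ0, h1])
    refine ⟨1, le_antisymm (by simpa using hle) ?_⟩
    rw [one_smul]
    exact tsub_eq_zero_iff_le.1 hz
  have hct : h v₀ ≠ ⊤ := hfin v₀
  have hd0 : 1 - h v₀ ≠ 0 := (tsub_pos_of_lt h1).ne'
  have hdt : 1 - h v₀ ≠ ⊤ := by finiteness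
  have hof : ENNReal.ofReal (h v₀).toReal = h v₀ := ENNReal.ofReal_toReal hct
  have hof' : ENNReal.ofReal (1 - (h v₀).toReal) = 1 - h v₀ := by
    rw [ENNReal.ofReal_sub _ ENNReal.toReal_nonneg, hof, ENNReal.ofReal_one]
  have key := hext ((h v₀)⁻¹ • h) ((1 - h v₀)⁻¹ • (ψ - h))
    (hsmul _ _ (ENNReal.inv_ne_top.2 h0) hfin hh) (ENNReal.inv_mul_cancel h0 hct)
    (hsmul _ _ (ENNReal.inv_ne_top.2 hd0) (fun v => ENNReal.sub_ne_top (hψ.1 v)) hd)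
    (by simpa [hψ0] using ENNReal.inv_mul_cancel hd0 hdt)
    (h v₀).toReal (ENNReal.toReal_pos h0 hct)
    (by simpa using (ENNReal.toReal_lt_toReal hct ENNReal.one_ne_top).2 h1) (fun v => by
      simp only [hof, hof', Pi.smul_apply, smul_eq_mul, Pi.sub_apply]
      rw [← mul_assoc, ← mul_assoc, ENNReal.mul_inv_cancel h0 hct,
        ENNReal.mul_inv_cancel hd0 hdt, one_mul, one_mul, add_tsub_cancel_of_le (hle v)])
  refine ⟨h v₀, ?_⟩
  conv_rhs => rw [← key.1]
  rw [smul_smul, ENNReal.mul_inv_cancel h0 hct, one_smul]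

end Harmonic

/-- Under the standing assumptions, in the transient case, if `ψ` is a
non-zero `β`-harmonic vector with `ψ_{v₀} = 1` which is extremal in `E(A,β)_{v₀}`, then
there is an infinite path `t` in `G` without repeated vertices, starting at `v₀`, such
that `ψ_v = lim_k (∑_n A^n_{v t_k} e^{-nβ}) / (∑_n A^n_{v₀ t_k} e^{-nβ})` for all `v`. -/
theorem stmt19 [Countable V] [DecidableEq V] (A : V → V → ℝ≥0∞)
    (hst : Standing A)
    (hiv : ∀ v ∈ NW A,
      Filter.limsup (fun n : ℕ => Apow A n v v ^ ((n : ℝ)⁻¹)) Filter.atTop ≠ ⊤)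
    (β : ℝ) (htr : ∀ v w : V, ∑' n : ℕ, Apow A n v w * expn β n ≠ ⊤)
    (v₀ : V) (ψ : V → ℝ≥0∞) (hψ : IsHarmonic A β ψ) (hψ0 : ψ v₀ = 1)
    (hext : ∀ ξ η : V → ℝ≥0∞, IsAlmostHarmonic A β ξ → ξ v₀ = 1 →
      IsAlmostHarmonic A β η → η v₀ = 1 → ∀ t : ℝ, 0 < t → t < 1 →
      (∀ v, ψ v = ENNReal.ofReal t * ξ v + ENNReal.ofReal (1 - t) * η v) →
      ξ = ψ ∧ η = ψ) :
    ∃ t : ℕ → V, t 0 = v₀ ∧ (∀ i : ℕ, A (t i) (t (i + 1)) ≠ 0) ∧ Function.Injective t ∧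
      ∀ v : V, Filter.Tendsto
        (fun k : ℕ => (∑' n : ℕ, Apow A n v (t k) * expn β n) /
          ∑' n : ℕ, Apow A n v₀ (t k) * expn β n)
        Filter.atTop (nhds (ψ v)) := by
  obtain ⟨t, ht0, hedge, hinj, hlim⟩ := exists_simple_path_tendsto_green_div
    (B := fun v w => (expb β)⁻¹ * A v w) (matOp_eq_iff.2 hψ.2) hψ.1
    (fun h => eq_smul_of_extremal hst.1 hψ hψ0 hext)
    (fun v w => by rw [green_expb_inv_mul]; exact htr v w) hψ0
  refine ⟨t, ht0, fun i => right_ne_zero_of_mul (hedge i), hinj, fun v => ?_⟩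
  simpa only [green_expb_inv_mul] using hlim v
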